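/- Let X be a finite nonempty set, let λ* and λ be probability vectors over X with λ_x > 0 for every x∈X, and let Δ ∈ ℝ^X with Δ_x ≤ 0 for all x. Define Z = Σ_{x∈X} λ_x e^{Δ_x} and the updated probability vector λ'_x = λ_x e^{Δ_x} / Z. Then D_KL(λ*||λ') − D_KL(λ*||λ) ≤ Σ_{x∈X} (λ_x − λ*_x) Δ_x + (1/2) Σ_{x∈X} λ_x Δ_x². -/

import Mathlib

/-!
Since `λ'_x = λ_x e^{Δ_x} / Z`, each summand of the difference of divergences equals
`λ*_x (log Z - Δ_x)`, so the difference is exactly `log Z - ∑ λ*_x Δ_x`. It remains to bound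
`log Z ≤ Z - 1`, and then `Z` through `e^t ≤ 1 + t + t²/2` for `t ≤ 0`
(`exp_le_quadratic_of_nonpos`), which gives `log Z ≤ ∑ λ_x Δ_x + (1/2) ∑ λ_x Δ_x²`.
-/

/-- Kullback–Leibler divergence between probability vectors on a finite set
(with the convention `0 · log 0 = 0`, which holds since `0 * Real.log _ = 0`). -/
noncomputable def klDiv {X : Type*} [Fintype X] (p q : X → ℝ) : ℝ :=
  ∑ x, p x * Real.log (p x / q x)

/-- Follows from `1 + s + s²/2 ≤ e^s` at `s = -t ≥ 0`, because
`(1 + t + t²/2) (1 - t + t²/2) = 1 + t⁴/4 ≥ 1`. -/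
theorem exp_le_quadratic_of_nonpos {t : ℝ} (ht : t ≤ 0) :
    Real.exp t ≤ 1 + t + t ^ 2 / 2 := by
  have h := Real.quadratic_le_exp_of_nonneg (neg_nonneg.mpr ht)
  have hmul : Real.exp t * Real.exp (-t) = 1 := by rw [← Real.exp_add]; simp
  have hpos : 0 ≤ 1 + t + t ^ 2 / 2 := by nlinarith [sq_nonneg (t + 1)]
  refine le_of_mul_le_mul_right ?_ (Real.exp_pos (-t))
  rw [hmul]
  nlinarith [mul_le_mul_of_nonneg_left h hpos, sq_nonneg (t ^ 2)]

/-- Exponentiated update decreases KL up to first/second order terms: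
`D_KL(λ*‖λ') − D_KL(λ*‖λ) ≤ Σ_x (λ_x − λ*_x) Δ_x + (1/2) Σ_x λ_x Δ_x²`. -/
theorem stmt_10
    {X : Type*} [Fintype X] [Nonempty X]
    (lamStar lam : X → ℝ)
    (hs0 : ∀ x, 0 ≤ lamStar x) (hs1 : ∑ x, lamStar x = 1)
    (hl0 : ∀ x, 0 < lam x) (hl1 : ∑ x, lam x = 1)
    (Δ : X → ℝ) (hΔ : ∀ x, Δ x ≤ 0)
    (Z : ℝ) (hZ : Z = ∑ x, lam x * Real.exp (Δ x))
    (lam' : X → ℝ) (hlam' : ∀ x, lam' x = lam x * Real.exp (Δ x) / Z) :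
    klDiv lamStar lam' - klDiv lamStar lam ≤
      ∑ x, (lam x - lamStar x) * Δ x + (1 / 2) * ∑ x, lam x * (Δ x) ^ 2 := by
  have hZpos : 0 < Z := by
    rw [hZ]
    exact Finset.sum_pos (fun x _ => mul_pos (hl0 x) (Real.exp_pos _)) Finset.univ_nonempty
  have hdiff : klDiv lamStar lam' - klDiv lamStar lam
      = Real.log Z - ∑ x, lamStar x * Δ x := by
    have hterm : ∀ x, lamStar x * Real.log (lamStar x / lam' x)
        - lamStar x * Real.log (lamStar x / lam x)
        = lamStar x * Real.log Z - lamStar x * Δ x := by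
      intro x
      -- `Real.log (a / b)` splits only for `a ≠ 0`; at `a = 0` both sides vanish.
      rcases (hs0 x).eq_or_lt with h | h
      · simp [← h]
      · have hl := (hl0 x).ne'
        have he := (Real.exp_pos (Δ x)).ne'
        rw [hlam' x, Real.log_div h.ne' (div_ne_zero (mul_ne_zero hl he) hZpos.ne'),
          Real.log_div (mul_ne_zero hl he) hZpos.ne', Real.log_mul hl he, Real.log_exp,
          Real.log_div h.ne' hl]
        ring
    unfold klDiv
    rw [← Finset.sum_sub_distrib, Finset.sum_congr rfl (fun x _ => hterm x),
      Finset.sum_sub_distrib, ← Finset.sum_mul, hs1, one_mul]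
  have hZle : Z ≤ ∑ x, lam x + ∑ x, lam x * Δ x + (1 / 2) * ∑ x, lam x * (Δ x) ^ 2 := by
    rw [hZ, Finset.mul_sum, ← Finset.sum_add_distrib, ← Finset.sum_add_distrib]
    refine Finset.sum_le_sum fun x _ => ?_
    have := mul_le_mul_of_nonneg_left (exp_le_quadratic_of_nonpos (hΔ x)) (hl0 x).le
    linarith
  have hlog := Real.log_le_sub_one_of_pos hZpos
  simp only [sub_mul, Finset.sum_sub_distrib]
  linarith
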